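/- Let n ≥ 1, d = n+1, j ∈ {1,…,n}, let p ∈ ℝⁿ with p ≠ 0, and let f : ℝⁿ\{0} → ℂ be differentiable at p. For x, y ∈ ℝ^d write ⟨x,y⟩_M = x_0 y_0 − Σ_{k=1}^n x_k y_k, φ_y(p) = y_0‖p‖ − Σ_{k=1}^n y_k p_k, and (θx)_μ = Σ_{ν=0}^n θ_{μν} x_ν. Then for every Schwartz function χ : ℝ^d × ℝ^d → ℂ with χ(0,0) = 1, the double integral I(ε) := (2π)^{−d} ∬_{ℝ^d×ℝ^d} χ(εx, εy) e^{−i⟨x,y⟩_M} e^{iφ_y(p)} [ −i ∂f/∂p_j(p) − ((θx)_0 p_j/‖p‖ − (θx)_j) f(p) ] dx dy is absolutely convergent for every ε > 0 and lim_{ε→0⁺} I(ε) = −i ∂f/∂p_j(p) − g_0(p)(p_j/‖p‖) f(p) + g_j(p) f(p) = (A_j f)(p). (One-particle warped convolution of the spatial coordinate operator: X_j^θ = X_j − g_0 V_j + g_j.) -/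

import Mathlib

open MeasureTheory Real Filter
open scoped SchwartzMap

noncomputable section

/-- ℝⁿ as a Euclidean space. -/
abbrev Eu (n : ℕ) := EuclideanSpace ℝ (Fin n)

/-- Partial derivative ∂f/∂p_j at p. -/
def pd {n : ℕ} (j : Fin n) (f : Eu n → ℂ) (p : Eu n) : ℂ :=
  fderiv ℝ f p (EuclideanSpace.single j 1)

/-- g_μ(p) = θ_{μ0}‖p‖ + Σ_{k=1}^n θ_{μk} p_k. -/
def gθ {n : ℕ} (θ : Fin (n + 1) → Fin (n + 1) → ℝ) (μ : Fin (n + 1)) (p : Eu n) : ℝ :=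
  θ μ 0 * ‖p‖ + ∑ k : Fin n, θ μ k.succ * p k

/-- Minkowski pairing ⟨x,y⟩_M = x₀y₀ − Σ_{k=1}ⁿ x_k y_k on ℝ^{n+1}. -/
def mink {n : ℕ} (x y : Eu (n + 1)) : ℝ :=
  x 0 * y 0 - ∑ k : Fin n, x k.succ * y k.succ

/-- Mass-shell translation phase φ_y(p) = y₀‖p‖ − Σ_{k=1}ⁿ y_k p_k. -/
def phase {n : ℕ} (y : Eu (n + 1)) (p : Eu n) : ℝ :=
  y 0 * ‖p‖ - ∑ k : Fin n, y k.succ * p k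

/-- (θx)_μ = Σ_ν θ_{μν} x_ν. -/
def thetaC {n : ℕ} (θ : Fin (n + 1) → Fin (n + 1) → ℝ) (x : Eu (n + 1))
    (μ : Fin (n + 1)) : ℝ :=
  ∑ ν : Fin (n + 1), θ μ ν * x ν

/-- The integrand of the warped-convolution oscillatory integral for the spatial
coordinate operator. -/
def integrand {n : ℕ} (θ : Fin (n + 1) → Fin (n + 1) → ℝ) (j : Fin n) (p : Eu n)
    (f : Eu n → ℂ) (χ : 𝓢(Eu (n + 1) × Eu (n + 1), ℂ)) (ε : ℝ)
    (z : Eu (n + 1) × Eu (n + 1)) : ℂ :=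
  χ (ε • z.1, ε • z.2) * Complex.exp (-Complex.I * (mink z.1 z.2 : ℝ))
    * Complex.exp (Complex.I * (phase z.2 p : ℝ))
    * (-Complex.I * pd j f p
        - ((thetaC θ z.1 0 * (p j / ‖p‖) - thetaC θ z.1 j.succ : ℝ) : ℂ) * f p)

section Oscillatory

open FourierTransform Topology
open scoped RealInnerProductSpace

variable {E : Type*} [NormedAddCommGroup E] [InnerProductSpace ℝ E]

theorem norm_iteratedFDeriv_prodMk_le {V : Type*} [NormedAddCommGroup V] [NormedSpace ℝ V]
    {f : V × V → ℂ} {N : ℕ∞} (hf : ContDiff ℝ N f) {m : ℕ} (hm : m ≤ N) (a v : V) :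
    ‖iteratedFDeriv ℝ m (fun v => f (a, v)) v‖ ≤ ‖iteratedFDeriv ℝ m f (a, v)‖ := by
  have hg : ContDiff ℝ N (fun z => f ((a, 0) + z)) := hf.comp (contDiff_const.add contDiff_id)
  have h : (fun v => f (a, v))
      = (fun z => f ((a, 0) + z)) ∘ ContinuousLinearMap.inr ℝ V V := by
    ext v; simp
  rw [h, ContinuousLinearMap.iteratedFDeriv_comp_right _ hg _ (by exact_mod_cast hm),
    iteratedFDeriv_comp_add_left]
  refine (ContinuousMultilinearMap.norm_compContinuousLinearMap_le _ _).trans ?_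
  simp only [ContinuousLinearMap.inr_apply, Prod.mk_add_mk, add_zero, zero_add]
  refine mul_le_of_le_one_right (norm_nonneg _) ?_
  exact Finset.prod_le_one (fun _ _ => norm_nonneg _)
    (fun _ _ => ContinuousLinearMap.norm_inr_le_one ℝ V V)

/-- The restriction of a Schwartz function on a product to the fibre over `a`. -/
def schwartzSlice (χ : 𝓢(E × E, ℂ)) (a : E) : 𝓢(E, ℂ) where
  toFun v := χ (a, v)
  smooth' := (χ.smooth ⊤).comp (contDiff_const.prodMk contDiff_id)
  decay' k m := by
    obtain ⟨C, hC⟩ := χ.decay' k m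
    refine ⟨C, fun v => le_trans ?_ (hC (a, v))⟩
    gcongr
    · exact norm_snd_le (a, v)
    · exact norm_iteratedFDeriv_prodMk_le (χ.smooth ⊤) (by exact_mod_cast le_top) a v

@[simp]
theorem schwartzSlice_apply (χ : 𝓢(E × E, ℂ)) (a v : E) : schwartzSlice χ a v = χ (a, v) := rfl

theorem seminorm_schwartzSlice_le (χ : 𝓢(E × E, ℂ)) (a : E) (k m : ℕ) :
    SchwartzMap.seminorm ℂ k m (schwartzSlice χ a) ≤ SchwartzMap.seminorm ℂ k m χ := by
  refine SchwartzMap.seminorm_le_bound ℂ k m _ (apply_nonneg _ _) fun v =>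
    le_trans ?_ (SchwartzMap.le_seminorm ℂ k m χ (a, v))
  gcongr
  · exact norm_snd_le (a, v)
  · exact norm_iteratedFDeriv_prodMk_le (χ.smooth ⊤) (by exact_mod_cast le_top) a v

/-- A continuous linear map on Schwartz space decays rapidly, uniformly over the slices of a
fixed Schwartz function. -/
theorem exists_uniform_decay_schwartzSlice (T : 𝓢(E, ℂ) →L[ℂ] 𝓢(E, ℂ)) (χ : 𝓢(E × E, ℂ))
    (k : ℕ) : ∃ C : ℝ, ∀ a v, (1 + ‖v‖) ^ k * ‖T (schwartzSlice χ a) v‖ ≤ C := by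
  let q : Seminorm ℂ 𝓢(E, ℂ) :=
    ((Finset.Iic (k, 0)).sup (schwartzSeminormFamily ℂ E ℂ)).comp T.toLinearMap
  have hq : Continuous q :=
    (Seminorm.continuous_finsetSup fun i _ =>
      (schwartz_withSeminorms ℂ E ℂ).continuous_seminorm i).comp T.continuous
  obtain ⟨s, C, -, hC⟩ :=
    Seminorm.bound_of_continuous (schwartz_withSeminorms ℂ E ℂ) q hq
  refine ⟨2 ^ k * (C * ∑ i ∈ s, SchwartzMap.seminorm ℂ i.1 i.2 χ), fun a v => ?_⟩
  have h1 := SchwartzMap.one_add_le_sup_seminorm_apply (𝕜 := ℂ) (m := (k, 0)) le_rfl le_rfl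
    (T (schwartzSlice χ a)) v
  rw [norm_iteratedFDeriv_zero] at h1
  refine h1.trans ?_
  gcongr
  refine (hC (schwartzSlice χ a)).trans ?_
  rw [smul_apply, NNReal.smul_def, smul_eq_mul]
  gcongr
  refine (Seminorm.le_def.1 (Seminorm.finset_sup_le_sum _ s) _).trans ?_
  rw [_root_.sum_apply]
  exact Finset.sum_le_sum fun i _ => seminorm_schwartzSlice_le χ a i.1 i.2

variable [FiniteDimensional ℝ E] [MeasurableSpace E] [BorelSpace E]

theorem integrable_const_mul_one_add_norm_inv (C : ℝ) :
    Integrable fun v : E => C * ((1 + ‖v‖) ^ (Module.finrank ℝ E + 1))⁻¹ := by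
  refine Integrable.const_mul ?_ C
  have h := integrable_one_add_norm (E := E) (μ := volume)
    (r := (Module.finrank ℝ E + 1 : ℕ)) (by push_cast; linarith)
  refine h.congr (Eventually.of_forall fun v => ?_)
  simp only
  rw [Real.rpow_neg (by positivity), Real.rpow_natCast]

theorem continuous_fourier_schwartzSlice (χ : 𝓢(E × E, ℂ)) :
    Continuous fun z : E × E => 𝓕 (schwartzSlice χ z.1) z.2 := by
  obtain ⟨C, hC⟩ := exists_uniform_decay_schwartzSlice (ContinuousLinearMap.id ℂ 𝓢(E, ℂ)) χ
    (Module.finrank ℝ E + 1)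
  simp only [SchwartzMap.fourier_coe, Real.fourier_eq', schwartzSlice_apply, smul_eq_mul]
  refine continuous_of_dominated
    (bound := fun v => C * ((1 + ‖v‖) ^ (Module.finrank ℝ E + 1))⁻¹) (fun z => ?_)
    (fun z => Eventually.of_forall fun v => ?_) (integrable_const_mul_one_add_norm_inv C)
    (Eventually.of_forall fun v => ?_)
  · exact Continuous.aestronglyMeasurable (by fun_prop)
  · rw [norm_mul, Complex.norm_exp_ofReal_mul_I, one_mul, ← div_eq_mul_inv,
      le_div_iff₀ (by positivity), mul_comm]
    exact hC z.1 v
  · fun_prop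

theorem integrable_schwartz_comp_smul_mul (χ : 𝓢(E × E, ℂ)) {L : E → ℂ} (hL : Continuous L)
    {C : ℝ} (hC : ∀ x, ‖L x‖ ≤ C * (1 + ‖x‖)) {u : E × E → ℂ} (hu : Continuous u)
    (hu1 : ∀ z, ‖u z‖ = 1) {ε : ℝ} (hε : 0 < ε) :
    Integrable fun z : E × E => χ (ε • z) * u z * L z.1 := by
  have hC0 : 0 ≤ C := by simpa using (norm_nonneg _).trans (hC 0)
  have : (volume : Measure (E × E)).IsAddHaarMeasure := by
    rw [Measure.volume_eq_prod]
    infer_instance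
  have h : Integrable fun z : E × E => C * ‖χ (ε • z)‖
      + C * ε⁻¹ * (‖ε • z‖ ^ 1 * ‖χ (ε • z)‖) :=
    ((((χ.integrable).norm.const_mul C).add
      ((χ.integrable_pow_mul volume 1).const_mul (C * ε⁻¹))).comp_smul hε.ne' :)
  refine h.mono' (Continuous.aestronglyMeasurable (by fun_prop))
    (Eventually.of_forall fun z => ?_)
  rw [norm_mul, norm_mul, hu1, mul_one, pow_one, norm_smul, Real.norm_of_nonneg hε.le]
  calc ‖χ (ε • z)‖ * ‖L z.1‖ ≤ ‖χ (ε • z)‖ * (C * (1 + ‖z‖)) := by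
        gcongr
        exact (hC z.1).trans (by gcongr; exact norm_fst_le z)
    _ = _ := by field_simp

theorem integral_comp_add_smul_isometry (G : E → ℂ) (J : E ≃ₗᵢ[ℝ] E) (q : E) {R : ℝ}
    (hR : 0 < R) :
    ∫ x, G x = (R : ℂ) ^ Module.finrank ℝ E * ∫ w, G (q + R • J.symm w) := by
  have h : ∫ w, G (q + R • J.symm w) = ∫ w, G (q + R • w) :=
    J.symm.measurePreserving.integral_comp J.symm.toHomeomorph.measurableEmbedding
      fun x => G (q + R • x)
  rw [h,
    Measure.integral_comp_smul volume (fun x => G (q + x)), integral_add_left_eq_self,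
    abs_of_pos (by positivity), Complex.real_smul]
  have : (R : ℂ) ≠ 0 := by exact_mod_cast hR.ne'
  push_cast
  field_simp

theorem integral_schwartz_oscillatory (χ : 𝓢(E × E, ℂ)) {L : E → ℂ} (hL : Continuous L)
    {C : ℝ} (hC : ∀ x, ‖L x‖ ≤ C * (1 + ‖x‖)) (J : E ≃ₗᵢ[ℝ] E) (q : E) {ε : ℝ} (hε : 0 < ε) :
    ∫ z : E × E, χ (ε • z) * Complex.exp ((-⟪z.2, J (z.1 - q)⟫ : ℝ) * Complex.I) * L z.1
      = ((2 * π : ℝ) : ℂ) ^ Module.finrank ℝ E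
        * ∫ w, 𝓕 (schwartzSlice χ (ε • (q + (2 * π * ε) • J.symm w))) w
          * L (q + (2 * π * ε) • J.symm w) := by
  have hi := integrable_schwartz_comp_smul_mul χ hL hC
    (u := fun z => Complex.exp ((-⟪z.2, J (z.1 - q)⟫ : ℝ) * Complex.I))
    (by fun_prop) (fun z => Complex.norm_exp_ofReal_mul_I _) hε
  have hπε : 0 < 2 * π * ε := by positivity
  have hεC : (ε : ℂ) ≠ 0 := by exact_mod_cast hε.ne'
  rw [Measure.volume_eq_prod] at hi ⊢
  rw [integral_prod _ hi, integral_comp_add_smul_isometry _ J q hπε,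
    ← integral_const_mul, ← integral_const_mul]
  congr 1
  ext w
  simp only
  rw [integral_mul_const, SchwartzMap.fourier_coe, Real.fourier_eq']
  have h := Measure.integral_comp_smul volume (fun v =>
    Complex.exp (((-2 * π * ⟪v, w⟫ : ℝ) : ℂ) * Complex.I)
      • schwartzSlice χ (ε • (q + (2 * π * ε) • J.symm w)) v) ε
  rw [abs_of_pos (by positivity), Complex.real_smul] at h
  have h' : (∫ v, Complex.exp (((-2 * π * ⟪v, w⟫ : ℝ) : ℂ) * Complex.I)
      • schwartzSlice χ (ε • (q + (2 * π * ε) • J.symm w)) v)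
      = (ε : ℂ) ^ Module.finrank ℝ E * ∫ y,
        χ (ε • (q + (2 * π * ε) • J.symm w, y)) * Complex.exp
          ((-⟪y, J (q + (2 * π * ε) • J.symm w - q)⟫ : ℝ) * Complex.I) := by
    have h2 : (∫ y, χ (ε • (q + (2 * π * ε) • J.symm w, y)) * Complex.exp
          ((-⟪y, J (q + (2 * π * ε) • J.symm w - q)⟫ : ℝ) * Complex.I))
        = ∫ y, Complex.exp (((-2 * π * ⟪ε • y, w⟫ : ℝ) : ℂ) * Complex.I)
          • schwartzSlice χ (ε • (q + (2 * π * ε) • J.symm w)) (ε • y) := by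
      congr 1
      ext y
      rw [smul_eq_mul, mul_comm, schwartzSlice_apply, Prod.smul_mk, add_sub_cancel_left,
        map_smul, LinearIsometryEquiv.apply_symm_apply, real_inner_smul_left,
        real_inner_smul_right]
      congr 4
      ring
    rw [h2, h, Complex.ofReal_inv, Complex.ofReal_pow,
      mul_inv_cancel_left₀ (pow_ne_zero _ hεC)]
  rw [h']
  push_cast
  ring

/-- Regularized oscillatory integrals with a nondegenerate bilinear phase reproduce the value of
the amplitude at the stationary point, independently of the Schwartz regularization. -/
theorem tendsto_integral_schwartz_oscillatory (χ : 𝓢(E × E, ℂ)) {L : E → ℂ} (hL : Continuous L)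
    {C : ℝ} (hC : ∀ x, ‖L x‖ ≤ C * (1 + ‖x‖)) (J : E ≃ₗᵢ[ℝ] E) (q : E) :
    Tendsto (fun ε : ℝ => (((2 * π : ℝ) : ℂ) ^ Module.finrank ℝ E)⁻¹
        * ∫ z : E × E,
          χ (ε • z) * Complex.exp ((-⟪z.2, J (z.1 - q)⟫ : ℝ) * Complex.I) * L z.1)
      (𝓝[>] 0) (𝓝 (χ 0 * L q)) := by
  have hC0 : 0 ≤ C := by simpa using (norm_nonneg _).trans (hC 0)
  have hcont := continuous_fourier_schwartzSlice χ
  have hlim : ∫ w, 𝓕 (schwartzSlice χ 0) w * L q = χ 0 * L q := by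
    have h : 𝓕⁻ (𝓕 (schwartzSlice χ 0)) 0 = schwartzSlice χ 0 0 := by
      rw [FourierTransform.fourierInv_fourier_eq]
    rw [SchwartzMap.fourierInv_coe, Real.fourierInv_eq'] at h
    rw [integral_mul_const]
    simpa [← Prod.zero_eq_mk] using congrArg (· * L q) h
  rw [← hlim]
  obtain ⟨D, hD⟩ := exists_uniform_decay_schwartzSlice (SchwartzMap.fourierTransformCLM ℂ) χ
    (Module.finrank ℝ E + 2)
  have hmain : Tendsto (fun ε : ℝ =>
      ∫ w, 𝓕 (schwartzSlice χ (ε • (q + (2 * π * ε) • J.symm w))) w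
          * L (q + (2 * π * ε) • J.symm w)) (𝓝[>] 0)
      (𝓝 (∫ w, 𝓕 (schwartzSlice χ 0) w * L q)) := by
    have hc : ∀ ε : ℝ, Continuous fun w =>
        𝓕 (schwartzSlice χ (ε • (q + (2 * π * ε) • J.symm w))) w := fun ε =>
      hcont.comp (f := fun w => (ε • (q + (2 * π * ε) • J.symm w), w)) (by fun_prop)
    refine tendsto_integral_filter_of_dominated_convergence
      (fun v => D * (C * (1 + ‖q‖ + 2 * π)) * ((1 + ‖v‖) ^ (Module.finrank ℝ E + 1))⁻¹)
      (Eventually.of_forall fun ε => ?_) ?_ (integrable_const_mul_one_add_norm_inv _)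
      (Eventually.of_forall fun w => ?_)
    · exact ((hc ε).mul (hL.comp (by fun_prop))).aestronglyMeasurable
    · filter_upwards [Ioo_mem_nhdsGT (zero_lt_one' ℝ)] with ε hε
      refine Eventually.of_forall fun w => ?_
      have h1 := hD (ε • (q + (2 * π * ε) • J.symm w)) w
      rw [SchwartzMap.fourierTransformCLM_apply] at h1
      have h2 : ‖L (q + (2 * π * ε) • J.symm w)‖ ≤ C * (1 + ‖q‖ + 2 * π) * (1 + ‖w‖) := by
        refine (hC _).trans ?_
        rw [mul_assoc C]
        refine mul_le_mul_of_nonneg_left ?_ hC0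
        have h3 : ‖(2 * π * ε) • J.symm w‖ ≤ 2 * π * ‖w‖ := by
          rw [norm_smul, LinearIsometryEquiv.norm_map, Real.norm_of_nonneg
            (by have := hε.1; positivity)]
          exact mul_le_mul_of_nonneg_right
            (mul_le_of_le_one_right (by positivity) hε.2.le) (norm_nonneg _)
        have h4 := norm_add_le q ((2 * π * ε) • J.symm w)
        nlinarith [norm_nonneg q, norm_nonneg w, Real.pi_pos,
          mul_nonneg (norm_nonneg q) (norm_nonneg w)]
      rw [norm_mul]
      set F := ‖𝓕 (schwartzSlice χ (ε • (q + (2 * π * ε) • J.symm w))) w‖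
      rw [← div_eq_mul_inv, le_div_iff₀ (by positivity)]
      calc F * ‖L (q + (2 * π * ε) • J.symm w)‖ * (1 + ‖w‖) ^ (Module.finrank ℝ E + 1)
          ≤ F * (C * (1 + ‖q‖ + 2 * π) * (1 + ‖w‖)) * (1 + ‖w‖) ^ (Module.finrank ℝ E + 1) := by
            gcongr
        _ = (1 + ‖w‖) ^ (Module.finrank ℝ E + 2) * F * (C * (1 + ‖q‖ + 2 * π)) := by ring
        _ ≤ _ := by gcongr
    · have hF : Continuous fun ε : ℝ =>
          𝓕 (schwartzSlice χ (ε • (q + (2 * π * ε) • J.symm w))) w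
            * L (q + (2 * π * ε) • J.symm w) :=
        (hcont.comp (f := fun ε : ℝ => (ε • (q + (2 * π * ε) • J.symm w), w))
          (by fun_prop)).mul (hL.comp (by fun_prop))
      have := hF.tendsto 0
      simp only [mul_zero, zero_smul, add_zero] at this
      exact this.mono_left nhdsWithin_le_nhds
  refine hmain.congr' ?_
  filter_upwards [self_mem_nhdsWithin] with ε hε
  rw [integral_schwartz_oscillatory χ hL hC J q hε, inv_mul_cancel_left₀]
  exact pow_ne_zero _ (by exact_mod_cast (by positivity : (2 * π : ℝ) ≠ 0))

end Oscillatory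

/-- The Minkowski reflection of the spatial coordinates. -/
def spatialReflection (n : ℕ) : Eu (n + 1) ≃ₗᵢ[ℝ] Eu (n + 1) :=
  LinearIsometryEquiv.piLpCongrRight 2
    (Fin.cons (LinearIsometryEquiv.refl ℝ ℝ) fun _ => LinearIsometryEquiv.neg ℝ)

/-- The point `(‖p‖, p)` of the mass shell. -/
def onShell {n : ℕ} (p : Eu n) : Eu (n + 1) :=
  WithLp.toLp 2 (Fin.cons ‖p‖ fun k => p k)

theorem inner_spatialReflection_sub_onShell {n : ℕ} (x y : Eu (n + 1)) (p : Eu n) :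
    inner ℝ y (spatialReflection n (x - onShell p)) = mink x y - phase y p := by
  simp only [spatialReflection, onShell, mink, phase, PiLp.inner_apply, Fin.sum_univ_succ,
    LinearIsometryEquiv.piLpCongrRight_apply]
  have h : ∀ k : Fin n, (p k - x k.succ) * y k.succ
      = y k.succ * p k - x k.succ * y k.succ := fun k => by ring
  simp [h, Finset.sum_sub_distrib]
  ring

theorem thetaC_onShell {n : ℕ} (θ : Fin (n + 1) → Fin (n + 1) → ℝ) (p : Eu n)
    (μ : Fin (n + 1)) : thetaC θ (onShell p) μ = gθ θ μ p := by
  simp [thetaC, onShell, gθ, Fin.sum_univ_succ]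

theorem exists_norm_affine_le {E : Type*} [NormedAddCommGroup E] [NormedSpace ℝ E]
    (b : ℂ) (A : E →L[ℝ] ℂ) : ∃ C, ∀ x, ‖b - A x‖ ≤ C * (1 + ‖x‖) := by
  refine ⟨‖b‖ + ‖A‖, fun x => (norm_sub_le _ _).trans ?_⟩
  have := A.le_opNorm x
  nlinarith [norm_nonneg b, norm_nonneg A, norm_nonneg x,
    mul_nonneg (norm_nonneg b) (norm_nonneg x)]

/-- One-particle warped convolution of the spatial coordinate operator: the regularized
oscillatory double integral is absolutely convergent for every ε > 0 and converges, as
ε → 0⁺, to (A_j f)(p) = −i ∂f/∂p_j(p) − g₀(p)(p_j/‖p‖) f(p) + g_j(p) f(p). -/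
theorem stmt1 {n : ℕ} (hn : 1 ≤ n) (θ : Fin (n + 1) → Fin (n + 1) → ℝ)
    (hθ00 : θ 0 0 = 0)
    (hθ0 : ∀ j : Fin n, θ 0 j.succ = θ j.succ 0)
    (hθs : ∀ i j : Fin n, θ i.succ j.succ = -θ j.succ i.succ)
    (j : Fin n) (p : Eu n) (hp : p ≠ 0)
    (f : Eu n → ℂ) (hf : DifferentiableAt ℝ f p)
    (χ : 𝓢(Eu (n + 1) × Eu (n + 1), ℂ)) (hχ : χ (0, 0) = 1) :
    (∀ ε : ℝ, 0 < ε → Integrable (integrand θ j p f χ ε)) ∧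
      Tendsto
        (fun ε : ℝ => (((2 * Real.pi) ^ (n + 1) : ℝ)⁻¹ : ℂ) * ∫ z, integrand θ j p f χ ε z)
        (nhdsWithin 0 (Set.Ioi 0))
        (nhds (-Complex.I * pd j f p
          - ((gθ θ 0 p * (p j / ‖p‖) : ℝ) : ℂ) * f p
          + ((gθ θ j.succ p : ℝ) : ℂ) * f p)) := by
  let L : Eu (n + 1) → ℂ := fun x => -Complex.I * pd j f p
    - ((thetaC θ x 0 * (p j / ‖p‖) - thetaC θ x j.succ : ℝ) : ℂ) * f p
  let A : Eu (n + 1) →ₗ[ℝ] ℂ :=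
    { toFun := fun x => ((thetaC θ x 0 * (p j / ‖p‖) - thetaC θ x j.succ : ℝ) : ℂ) * f p
      map_add' := fun x y => by
        simp only [thetaC, PiLp.add_apply, mul_add, Finset.sum_add_distrib]
        push_cast
        ring
      map_smul' := fun c x => by
        simp only [thetaC, PiLp.smul_apply, smul_eq_mul, mul_left_comm _ c, ← Finset.mul_sum,
          RingHom.id_apply, Complex.real_smul]
        push_cast
        ring }
  obtain ⟨C, hC⟩ := exists_norm_affine_le (-Complex.I * pd j f p)
    (LinearMap.toContinuousLinearMap A)
  have hL : Continuous L :=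
    continuous_const.sub (LinearMap.toContinuousLinearMap A).continuous
  have hLC : ∀ x, ‖L x‖ ≤ C * (1 + ‖x‖) := hC
  have key : ∀ ε : ℝ, integrand θ j p f χ ε = fun z => χ (ε • z) * Complex.exp
      ((-inner ℝ z.2 (spatialReflection n (z.1 - onShell p)) : ℝ) * Complex.I) * L z.1 := by
    intro ε
    ext z
    rw [integrand, inner_spatialReflection_sub_onShell, mul_assoc (χ _), ← Complex.exp_add]
    congr 3
    push_cast
    ring
  refine ⟨fun ε hε => ?_, ?_⟩
  · rw [key]
    exact integrable_schwartz_comp_smul_mul χ hL hLC (by fun_prop)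
      (fun z => Complex.norm_exp_ofReal_mul_I _) hε
  · have h := tendsto_integral_schwartz_oscillatory χ hL hLC (spatialReflection n) (onShell p)
    simp only [key]
    have hχ0 : χ 0 = 1 := hχ
    rw [finrank_euclideanSpace_fin, hχ0, one_mul] at h
    convert h using 2
    · push_cast
      rfl
    · simp only [L, thetaC_onShell]
      push_cast
      ring

end
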